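/- Let W be a finite-dimensional real vector space with split nondegenerate symmetric bilinear form. Then the Clifford algebra Cl(W) has no nontrivial two-sided ideals, i.e. Cl(W) is a simple algebra. Consequently, for any nonzero Cl(W)-module 𝒮, the action map ρ: Cl(W) → End(𝒮) is injective. -/

import Mathlib

/-!
Contraction with `B w` is the supercommutator with `w`. In even dimension the grading involution of
`Cl(W)` is inner: when `2` is invertible it is conjugation by the product of an orthogonal basis,
and in characteristic two it is the identity. So every two-sided ideal is stable under contractions.
For a basis vector `a` every element is `y + a z`, with `y` and `z` generated by the remaining basis
vectors, and contraction with the coordinate of `a` sends it to `z`. If `z ≠ 0`, pass to `z`;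
otherwise the element was `y`. Removing the basis vectors one by one in this way turns a nonzero
element of an ideal into a nonzero scalar in the same ideal.
-/

open CliffordAlgebra Module

section Anticommuting

theorem exists_forall_mul_eq_neg_one_pow_mul {M n : Type*} [Monoid M] [HasDistribNeg M]
    [DecidableEq n] {e : n → M} (he : Pairwise fun i j ↦ e i * e j = -(e j * e i))
    (s : Finset n) : ∃ u : M, ∀ j, u * e j = (-1) ^ (s.erase j).card * (e j * u) := by
  induction s using Finset.induction_on with
  | empty => exact ⟨1, by simp⟩
  | insert a s ha ih =>
    obtain ⟨u, hu⟩ := ih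
    refine ⟨e a * u, fun j ↦ ?_⟩
    have hcomm (k : ℕ) : Commute (e a) ((-1) ^ k) := (Commute.neg_one_right _).pow_right k
    rw [mul_assoc, hu, (hcomm _).left_comm]
    rcases eq_or_ne a j with rfl | haj
    · rw [Finset.erase_insert_eq_erase]
    · have ha' : a ∉ s.erase j := fun h ↦ ha (Finset.mem_of_mem_erase h)
      rw [Finset.erase_insert_of_ne haj, Finset.card_insert_of_notMem ha', pow_succ,
        ← mul_assoc (e a), he haj, mul_neg_one, neg_mul, neg_mul, mul_neg, mul_assoc (e j)]

theorem exists_forall_mul_eq_neg_mul_of_even_card {M n : Type*} [Monoid M] [HasDistribNeg M]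
    [Fintype n] (hn : Even (Fintype.card n)) {e : n → M}
    (he : Pairwise fun i j ↦ e i * e j = -(e j * e i)) : ∃ u : M, ∀ j, u * e j = -(e j * u) := by
  classical
  obtain ⟨u, hu⟩ := exists_forall_mul_eq_neg_one_pow_mul he Finset.univ
  refine ⟨u, fun j ↦ ?_⟩
  have hodd : Odd (Fintype.card n - 1) :=
    Nat.Even.sub_odd (Fintype.card_pos_iff.mpr ⟨j⟩) hn odd_one
  rw [hu, Finset.card_erase_of_mem (Finset.mem_univ j), Finset.card_univ, hodd.neg_one_pow,
    neg_one_mul]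

end Anticommuting

theorem toSubmodule_adjoin_le {R A : Type*} [CommSemiring R] [Semiring A] [Algebra R A]
    {s : Set A} {N : Submodule R A} (h_one : 1 ∈ N) (h_mul : ∀ a ∈ s, ∀ x ∈ N, a * x ∈ N) :
    Subalgebra.toSubmodule (Algebra.adjoin R s) ≤ N := by
  rw [Algebra.adjoin_eq_span, Submodule.span_le]
  intro x hx
  induction hx using Submonoid.closure_induction_left with
  | one => exact h_one
  | mul_left a ha x _ hx => exact h_mul a ha x hx

section CommRing

variable {R M n : Type*} [CommRing R] [AddCommGroup M] [Module R M] {Q : QuadraticForm R M}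

theorem contractLeft_polarBilin (w : M) (x : CliffordAlgebra Q) :
    contractLeft (Q.polarBilin w) x = ι Q w * x - involute x * ι Q w := by
  induction x using left_induction with
  | algebraMap r => simp [Algebra.commutes r (ι Q w)]
  | add x y hx hy => rw [map_add, hx, hy, map_add]; noncomm_ring
  | ι_mul x v hx =>
    rw [contractLeft_ι_mul, hx, map_mul, involute_ι, ← mul_assoc (ι Q w), ι_mul_ι_comm w v,
      sub_mul, ← Algebra.smul_def, QuadraticMap.polarBilin_apply_apply]
    noncomm_ring

theorem involute_eq_conj {u : (CliffordAlgebra Q)ˣ} (hu : ∀ w, ↑u * ι Q w = -(ι Q w * u))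
    (x : CliffordAlgebra Q) : involute x = u * x * ↑u⁻¹ := by
  rw [Units.eq_mul_inv_iff_mul_eq]
  induction x using left_induction with
  | algebraMap r => rw [AlgHom.commutes, Algebra.commutes]
  | add x y hx hy => rw [map_add, add_mul, hx, hy, mul_add]
  | ι_mul x v hx =>
    rw [map_mul, involute_ι, mul_assoc, hx, ← mul_assoc (u : CliffordAlgebra Q), hu, neg_mul,
      neg_mul, mul_assoc]

theorem contractLeft_polarBilin_mem_twoSidedIdeal {u : (CliffordAlgebra Q)ˣ}
    (hu : ∀ w, ↑u * ι Q w = -(ι Q w * u)) {I : TwoSidedIdeal (CliffordAlgebra Q)}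
    {x : CliffordAlgebra Q} (hx : x ∈ I) (w : M) : contractLeft (Q.polarBilin w) x ∈ I := by
  rw [contractLeft_polarBilin, involute_eq_conj hu]
  exact I.sub_mem (I.mul_mem_left _ _ hx)
    (I.mul_mem_right _ _ (I.mul_mem_right _ _ (I.mul_mem_left _ _ hx)))

theorem contractLeft_eq_zero_of_mem_adjoin {d : Dual R M} {s : Set M} (hd : ∀ v ∈ s, d v = 0)
    {x : CliffordAlgebra Q} (hx : x ∈ Algebra.adjoin R (ι Q '' s)) : contractLeft d x = 0 := by
  suffices h : Subalgebra.toSubmodule (Algebra.adjoin R (ι Q '' s)) ≤ (contractLeft d).ker from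
    LinearMap.mem_ker.mp (h hx)
  refine toSubmodule_adjoin_le (contractLeft_one _ d) ?_
  rintro _ ⟨v, hv, rfl⟩ x hx
  rw [LinearMap.mem_ker] at hx ⊢
  rw [contractLeft_ι_mul, hd v hv, hx, zero_smul, mul_zero, sub_zero]

theorem exists_eq_add_ι_mul_of_mem_adjoin_insert {a : M} {s : Set M} {x : CliffordAlgebra Q}
    (hx : x ∈ Algebra.adjoin R (ι Q '' insert a s)) :
    ∃ y ∈ Algebra.adjoin R (ι Q '' s), ∃ z ∈ Algebra.adjoin R (ι Q '' s),
      x = y + ι Q a * z := by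
  set A := Algebra.adjoin R (ι Q '' s)
  suffices h : Subalgebra.toSubmodule (Algebra.adjoin R (ι Q '' insert a s)) ≤
      A.toSubmodule ⊔ A.toSubmodule.map (LinearMap.mulLeft R (ι Q a)) by
    obtain ⟨y, hy, _, ⟨z, hz, rfl⟩, hyz⟩ := Submodule.mem_sup.mp (h hx)
    exact ⟨y, hy, z, hz, hyz.symm⟩
  have mem_sup {y z} (hy : y ∈ A) (hz : z ∈ A) : y + ι Q a * z ∈
      A.toSubmodule ⊔ A.toSubmodule.map (LinearMap.mulLeft R (ι Q a)) :=
    Submodule.add_mem_sup hy (Submodule.mem_map_of_mem hz)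
  refine toSubmodule_adjoin_le (by simpa using mem_sup A.one_mem A.zero_mem) ?_
  rintro _ ⟨v, hv, rfl⟩ x hx
  obtain ⟨y, hy, _, ⟨z, hz, rfl⟩, rfl⟩ := Submodule.mem_sup.mp hx
  rw [LinearMap.mulLeft_apply]
  rcases hv with rfl | hv
  · have h : ι Q v * (y + ι Q v * z) = Q v • z + ι Q v * y := by
      rw [mul_add, ← mul_assoc, ι_sq_scalar, ← Algebra.smul_def, add_comm]
    exact h ▸ mem_sup (A.smul_mem hz _) hy
  · have hvA : ι Q v ∈ A := Algebra.subset_adjoin (Set.mem_image_of_mem _ hv)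
    have h : ι Q v * (y + ι Q a * z) =
        (ι Q v * y + QuadraticMap.polar Q v a • z) + ι Q a * -(ι Q v * z) := by
      rw [mul_add, ← mul_assoc, ι_mul_ι_comm, sub_mul, ← Algebra.smul_def]
      noncomm_ring
    exact h ▸ mem_sup (add_mem (mul_mem hvA hy) (A.smul_mem hz _)) (neg_mem (mul_mem hvA hz))

theorem adjoin_ι_image_range_basis (b : Basis n R M) :
    Algebra.adjoin R (ι Q '' Set.range b) = ⊤ := by
  rw [← Algebra.adjoin_span, Submodule.span_image, b.span_eq, Submodule.map_top,
    LinearMap.coe_range, adjoin_range_ι]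

theorem nontrivial_cliffordAlgebra [Nontrivial R] [Module.Free R M] (Q : QuadraticForm R M) :
    Nontrivial (CliffordAlgebra Q) := by
  obtain ⟨B, hB⟩ := LinearMap.BilinMap.toQuadraticMap_surjective (0 - Q)
  have h_one : changeForm hB 1 ≠ 0 := by
    rw [changeForm_one]
    exact one_ne_zero (α := ExteriorAlgebra R M)
  exact ⟨1, 0, fun h ↦ h_one (by rw [h, map_zero])⟩

theorem exists_algebraMap_mem_of_mem_adjoin (b : Basis n R M) {I : Set (CliffordAlgebra Q)}
    (hI : ∀ d : Dual R M, ∀ x ∈ I, contractLeft d x ∈ I) (s : Finset n)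
    {x : CliffordAlgebra Q} (hx : x ∈ Algebra.adjoin R (ι Q '' (b '' s))) (hxI : x ∈ I)
    (hx0 : x ≠ 0) : ∃ r : R, r ≠ 0 ∧ algebraMap R (CliffordAlgebra Q) r ∈ I := by
  classical
  induction s using Finset.induction_on generalizing x with
  | empty =>
    rw [Finset.coe_empty, Set.image_empty, Set.image_empty, Algebra.adjoin_empty] at hx
    obtain ⟨r, rfl⟩ := Algebra.mem_bot.mp hx
    exact ⟨r, fun hr ↦ hx0 (by rw [hr, map_zero]), hxI⟩
  | insert a s ha ih =>
    rw [Finset.coe_insert, Set.image_insert_eq] at hx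
    obtain ⟨y, hy, z, hz, rfl⟩ := exists_eq_add_ι_mul_of_mem_adjoin_insert hx
    have hcoord : ∀ v ∈ b '' s, b.coord a v = 0 := by
      rintro _ ⟨i, hi, rfl⟩
      rw [b.coord_apply, b.repr_self, Finsupp.single_eq_of_ne (ne_of_mem_of_not_mem hi ha).symm]
    have hcontract : contractLeft (b.coord a) (y + ι Q (b a) * z) = z := by
      rw [map_add, contractLeft_ι_mul, contractLeft_eq_zero_of_mem_adjoin hcoord hy,
        contractLeft_eq_zero_of_mem_adjoin hcoord hz, b.coord_apply, b.repr_self,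
        Finsupp.single_eq_same, one_smul, mul_zero, sub_zero, zero_add]
    by_cases hz0 : z = 0
    · rw [hz0, mul_zero, add_zero] at hxI hx0
      exact ih hy hxI hx0
    · exact ih hz (hcontract ▸ hI (b.coord a) _ hxI) hz0

theorem exists_algebraMap_mem_of_contractLeft_mem [Module.Free R M] [Module.Finite R M]
    {I : Set (CliffordAlgebra Q)} (hI : ∀ d : Dual R M, ∀ x ∈ I, contractLeft d x ∈ I)
    {x : CliffordAlgebra Q} (hxI : x ∈ I) (hx0 : x ≠ 0) :
    ∃ r : R, r ≠ 0 ∧ algebraMap R (CliffordAlgebra Q) r ∈ I := by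
  refine exists_algebraMap_mem_of_mem_adjoin (Free.chooseBasis R M) hI Finset.univ ?_ hxI hx0
  rw [Finset.coe_univ, Set.image_univ, adjoin_ι_image_range_basis]
  exact Algebra.mem_top

end CommRing

section Field

variable {K V : Type*} [Field K] [AddCommGroup V] [Module K V]

theorem exists_orthogonal_basis_isUnit [FiniteDimensional K V] {Q : QuadraticForm K V}
    (h2 : (2 : K) ≠ 0) (hQ : Q.polarBilin.Nondegenerate) :
    ∃ b : Basis (Fin (finrank K V)) K V,
      Q.polarBilin.IsOrthoᵢ b ∧ ∀ i, IsUnit (Q (b i)) := by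
  have : Invertible (2 : K) := invertibleOfNonzero h2
  obtain ⟨b, hb⟩ := LinearMap.BilinForm.exists_orthogonal_basis (B := Q.polarBilin)
    ⟨QuadraticMap.polar_comm Q⟩
  refine ⟨b, hb, fun i ↦ IsUnit.mk0 _ fun h ↦ ?_⟩
  refine hb.not_isOrtho_basis_self_of_separatingLeft hQ.1 i ?_
  rw [QuadraticMap.polarBilin_apply_apply, QuadraticMap.polar_self, h, smul_zero]

theorem exists_unit_mul_ι_eq_neg [FiniteDimensional K V] {Q : QuadraticForm K V}
    (hQ : Q.polarBilin.Nondegenerate) (heven : Even (finrank K V)) :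
    ∃ u : (CliffordAlgebra Q)ˣ, ∀ w, ↑u * ι Q w = -(ι Q w * u) := by
  by_cases h2 : (2 : K) = 0
  · refine ⟨1, fun w ↦ ?_⟩
    rw [Units.val_one, one_mul, mul_one, eq_neg_iff_add_eq_zero, ← two_smul K, h2, zero_smul]
  · obtain ⟨b, hortho, hunit⟩ := exists_orthogonal_basis_isUnit h2 hQ
    let e (i) : (CliffordAlgebra Q)ˣ := (isUnit_ι_of_isUnit Q (hunit i)).unit
    have he : Pairwise fun i j ↦ e i * e j = -(e j * e i) := fun i j hij ↦ Units.ext <|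
      ι_mul_ι_comm_of_isOrtho (QuadraticMap.isOrtho_polarBilin.mp (hortho hij))
    obtain ⟨u, hu⟩ := exists_forall_mul_eq_neg_mul_of_even_card (by simpa using heven) he
    have heq : LinearMap.mulLeft K (u : CliffordAlgebra Q) ∘ₗ ι Q =
        -(LinearMap.mulRight K (u : CliffordAlgebra Q) ∘ₗ ι Q) :=
      b.ext fun i ↦ by simpa [e] using congrArg Units.val (hu i)
    exact ⟨u, LinearMap.congr_fun heq⟩

theorem isSimpleRing_cliffordAlgebra_of_even_finrank [FiniteDimensional K V]
    {Q : QuadraticForm K V} (hQ : Q.polarBilin.Nondegenerate) (heven : Even (finrank K V)) :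
    IsSimpleRing (CliffordAlgebra Q) := by
  have := nontrivial_cliffordAlgebra Q
  refine IsSimpleRing.of_eq_bot_or_eq_top fun I ↦ or_iff_not_imp_left.mpr fun hI ↦ ?_
  obtain ⟨u, hu⟩ := exists_unit_mul_ι_eq_neg hQ heven
  have hcontract (d : Dual K V) (x) (hx : x ∈ I) : contractLeft d x ∈ I := by
    obtain ⟨w, rfl⟩ := (LinearMap.BilinForm.toDual Q.polarBilin hQ).surjective d
    exact contractLeft_polarBilin_mem_twoSidedIdeal hu hx w
  obtain ⟨x, hxI, hx0⟩ : ∃ x ∈ I, x ≠ 0 := by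
    by_contra! h
    exact hI (le_bot_iff.mp fun x hx ↦ (TwoSidedIdeal.mem_bot _).mpr (h x hx))
  obtain ⟨r, hr0, hrI⟩ :=
    exists_algebraMap_mem_of_contractLeft_mem (I := {x | x ∈ I}) hcontract hxI hx0
  rw [← TwoSidedIdeal.one_mem_iff, ← map_one (algebraMap K (CliffordAlgebra Q)),
    ← inv_mul_cancel₀ hr0, map_mul]
  exact I.mul_mem_left _ _ hrI

theorem even_finrank_of_coe_eq_setOf_forall_apply_eq_zero [FiniteDimensional K V]
    {B : LinearMap.BilinForm K V} (hnd : B.Nondegenerate) {E : Submodule K V}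
    (hE : (E : Set V) = {w | ∀ e ∈ E, B w e = 0}) : Even (finrank K V) := by
  have hEorth : B.flip.orthogonal E = E := SetLike.coe_injective hE.symm
  have h := LinearMap.BilinForm.finrank_orthogonal hnd.flip E
  rw [hEorth] at h
  exact ⟨finrank K E, by have := E.finrank_le; omega⟩

theorem polarBilin_toQuadraticMap_half_smul [NeZero (2 : K)] {B : LinearMap.BilinForm K V}
    (hB : B.IsSymm) : ((1 / 2 : K) • B).toQuadraticMap.polarBilin = B := by
  ext v w
  rw [LinearMap.BilinMap.polarBilin_toQuadraticMap, LinearMap.add_apply, LinearMap.add_apply,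
    LinearMap.flip_apply, LinearMap.smul_apply, LinearMap.smul_apply, LinearMap.smul_apply,
    LinearMap.smul_apply, hB.eq w v, ← add_smul, add_halves, one_smul]

end Field

theorem smul_left_injective_of_isSimpleRing {A S : Type*} [Ring A] [IsSimpleRing A]
    [AddCommGroup S] [Module A S] [Nontrivial S] :
    Function.Injective (fun (x : A) (s : S) ↦ x • s) := by
  have : Nontrivial (AddMonoid.End S) := by
    obtain ⟨s, hs⟩ := exists_ne (0 : S)
    exact ⟨1, 0, fun h ↦ hs (DFunLike.congr_fun h s)⟩
  exact fun x y hxy ↦ (toAddMonoidEnd A S).injective (AddMonoidHom.ext (congrFun hxy))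

theorem stmt11_general {K V : Type*} [Field K] [AddCommGroup V] [Module K V]
    [FiniteDimensional K V] {Q : QuadraticForm K V} (hQ : Q.polarBilin.Nondegenerate)
    (heven : Even (finrank K V)) (S : Type*) [AddCommGroup S] [Module (CliffordAlgebra Q) S]
    [Nontrivial S] :
    (∀ I : TwoSidedIdeal (CliffordAlgebra Q), I = ⊥ ∨ I = ⊤) ∧
      Function.Injective (fun (x : CliffordAlgebra Q) (s : S) ↦ x • s) :=
  have := isSimpleRing_cliffordAlgebra_of_even_finrank hQ heven
  ⟨eq_bot_or_eq_top, smul_left_injective_of_isSimpleRing⟩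

/-- The Clifford algebra of a finite-dimensional split real quadratic space
`(W,B)` (split: `W` admits a Lagrangian subspace) is simple — it has no two-sided ideals
other than `0` and the whole algebra — and consequently for any nonzero module `𝒮` over
`Cl(W)` the action map `Cl(W) → End(𝒮)` is injective.
Convention: `Q = (1/2) • B`, so `w² = (B w w / 2)·1`. -/
theorem stmt11 {W : Type*} [AddCommGroup W] [Module ℝ W] [FiniteDimensional ℝ W]
    (B : LinearMap.BilinForm ℝ W) (hsymm : B.IsSymm) (hnd : B.Nondegenerate)
    (hsplit : ∃ E : Submodule ℝ W, (E : Set W) = {w : W | ∀ e ∈ E, B w e = 0})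
    (𝒮 : Type*) [AddCommGroup 𝒮]
    [Module (CliffordAlgebra (((1/2 : ℝ) • B).toQuadraticMap)) 𝒮] [Nontrivial 𝒮] :
    (∀ I : TwoSidedIdeal (CliffordAlgebra (((1/2 : ℝ) • B).toQuadraticMap)),
        I = ⊥ ∨ I = ⊤) ∧
    Function.Injective
      (fun x : CliffordAlgebra (((1/2 : ℝ) • B).toQuadraticMap) =>
        (fun s : 𝒮 => x • s)) :=
  stmt11_general ((polarBilin_toQuadraticMap_half_smul hsymm).symm ▸ hnd)
    (hsplit.elim fun _ ↦ even_finrank_of_coe_eq_setOf_forall_apply_eq_zero hnd) 𝒮
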